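/- Let g be a seven-dimensional complex Lie algebra with a six-dimensional (complex) abelian ideal u and let e₇ ∈ g∖u. Then the following are equivalent: (i) there exists a closed four-form Ψ ∈ Λ⁴g* such that for some basis f¹,…,f⁷ of g*, Ψ = f^{1234}+f^{1256}+f^{3456}−f^{2467}+f^{2357}+f^{1457}+f^{1367} (i.e. g admits a cocalibrated (G₂)_ℂ-structure); (ii) there exists a closed four-form Ω ∈ Λ⁴Ann(span(e₇)) of length l(Ω) ≥ 2. -/

import Mathlib

open Module

section AltMachinery

variable {F : Type*} [Field F] {V : Type*} [AddCommGroup V] [Module F V]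

/-- The wedge `φ₁ ∧ … ∧ φ_m` of `m` covectors, as an alternating `m`-form on `V`:
`(φ₁ ∧ … ∧ φ_m)(v₁,…,v_m) = det (φ_i (v_j))`. -/
noncomputable def wedgeCov (m : ℕ) (φ : Fin m → Module.Dual F V) :
    V [⋀^Fin m]→ₗ[F] F :=
  (Matrix.detRowAlternating : (Fin m → F) [⋀^Fin m]→ₗ[F] F).compLinearMap
    (LinearMap.pi φ)

/-- A decomposable alternating `m`-form: a wedge of `m` covectors. -/
def AltDec (m : ℕ) (X : V [⋀^Fin m]→ₗ[F] F) : Prop :=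
  ∃ φ : Fin m → Module.Dual F V, X = wedgeCov m φ

/-- The `m`-form `X` is a sum of `l` decomposable `m`-forms. -/
def AltLenLE (m l : ℕ) (X : V [⋀^Fin m]→ₗ[F] F) : Prop :=
  ∃ Y : Fin l → (V [⋀^Fin m]→ₗ[F] F), (∀ i, AltDec m (Y i)) ∧ X = ∑ i, Y i

/-- The `m`-form `X` has length `l`: it is a sum of `l` decomposable `m`-forms and of no
smaller number of them. -/
def AltHasLen (m l : ℕ) (X : V [⋀^Fin m]→ₗ[F] F) : Prop :=
  AltLenLE m l X ∧ ∀ j < l, ¬ AltLenLE m j X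

end AltMachinery

section CE

variable {F : Type*} [Field F] {g : Type*} [LieRing g] [LieAlgebra F g]

/-- The Chevalley–Eilenberg differential of a `(k+1)`-form (given as a function on tuples):
`(dρ)(x₀,…,x_{k+1}) = ∑_{i<j} (-1)^{i+j} ρ(⁅x_i,x_j⁆, x₀,…,x̂_i,…,x̂_j,…,x_{k+1})`. -/
noncomputable def ceDiff (k : ℕ) (ρ : (Fin (k + 1) → g) → F) : (Fin (k + 2) → g) → F :=
  fun x => ∑ i : Fin (k + 2), ∑ j : Fin (k + 2),
    if h : (i : ℕ) < (j : ℕ) then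
      (-1 : F) ^ ((i : ℕ) + (j : ℕ)) *
        ρ (Fin.cons ⁅x i, x j⁆ fun l : Fin k =>
            x (j.succAbove ((⟨(i : ℕ),
              Nat.lt_of_lt_of_le h (Nat.lt_succ_iff.mp j.isLt)⟩ : Fin (k + 1)).succAbove l)))
    else 0

end CE

section G2Forms

variable {F : Type*} [Field F] {g : Type*} [AddCommGroup g] [Module F g]

/-- The wedge `f^i ∧ f^j ∧ f^k ∧ f^l` of four covectors from the basis `b` of `g*`. -/
noncomputable def bw (b : Basis (Fin 7) F (Module.Dual F g)) (i j k l : Fin 7) :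
    g [⋀^Fin 4]→ₗ[F] F :=
  wedgeCov 4 ![b i, b j, b k, b l]

/-- The four-form `f^{1234}+f^{1256}+f^{3456}-f^{2467}+f^{2357}+f^{1457}+f^{1367}` (the
Hodge dual of a `G₂`- resp. `(G₂)_ℂ`-structure), written with `0`-based indices. -/
noncomputable def stdG2 (b : Basis (Fin 7) F (Module.Dual F g)) : g [⋀^Fin 4]→ₗ[F] F :=
  bw b 0 1 2 3 + bw b 0 1 4 5 + bw b 2 3 4 5 - bw b 1 3 5 6 +
    bw b 1 2 4 6 + bw b 0 3 4 6 + bw b 0 2 5 6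

/-- The four-form `f^{1234}-f^{1256}-f^{3456}-f^{2467}+f^{2357}+f^{1457}+f^{1367}` (the
Hodge dual of a `G₂*`-structure), written with `0`-based indices. -/
noncomputable def stdG2star (b : Basis (Fin 7) F (Module.Dual F g)) :
    g [⋀^Fin 4]→ₗ[F] F :=
  bw b 0 1 2 3 - bw b 0 1 4 5 - bw b 2 3 4 5 - bw b 1 3 5 6 +
    bw b 1 2 4 6 + bw b 0 3 4 6 + bw b 0 2 5 6

/-- Membership in `Λ⁴W ⊆ Λ⁴g*` for a subspace `W ⊆ g*`: the span of the wedges of four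
covectors from `W`. -/
def mem4Pow (W : Submodule F (Module.Dual F g)) (Ω : g [⋀^Fin 4]→ₗ[F] F) : Prop :=
  Ω ∈ Submodule.span F
    {Y : g [⋀^Fin 4]→ₗ[F] F |
      ∃ φ : Fin 4 → Module.Dual F g, (∀ i, φ i ∈ W) ∧ Y = wedgeCov 4 φ}

end G2Forms

/-!
Let `n` be the covector with kernel `u` and `n e₇ = 1`, and let `D = ad e₇`. Since `u` is abelian,
`d Φ = -n ∧ (D · Φ)`, where `D` acts as a derivation. As `D` maps `g` into `u`, this depends only
on the restriction of `Φ` to `u`. Restriction also identifies `Λ⁴ Ann(span e₇)` with `Λ⁴ u*`, so it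
suffices that a four-form `Θ` on `u` is the restriction of some `stdG2 b` if and only if it is not
decomposable.

A four-form `Θ` on a six-dimensional space amounts to the alternating form
`(α, β) ↦ α ∧ β ∧ Θ` on covectors. Its symplectic normal form writes `Θ` as a combination of the
three products `ωᵢ ∧ ωⱼ`, where `ω₀`, `ω₁`, `ω₂` are the two-forms `f (i, 0) ∧ f (i, 1)` of a basis
`f` of covectors. If `Θ` is not decomposable, at least two coefficients are nonzero. They become `1`
after rescaling the basis by square roots, and the resulting two normal forms are both restrictions
of `stdG2`.

Conversely, a decomposable four-form on a six-dimensional space is annihilated by contraction with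
some nonzero `k`, whereas `n ∧ ι_k (stdG2 b)` is nonzero whenever `n` and `k` are.
-/

section ExteriorAlgebra

variable {F : Type*} [Field F] {V : Type*} [AddCommGroup V] [Module F V] {k : ℕ}

/-- The wedge product `α ∧ ψ` of a covector with an alternating form, normalised so that a `k`-fold
product of covectors is the determinant `wedgeCov`. -/
noncomputable def covWedge :
    Dual F V →ₗ[F] V [⋀^Fin k]→ₗ[F] F →ₗ[F] V [⋀^Fin (k + 1)]→ₗ[F] F :=
  (LinearMap.smulRightₗ (R := F) (M := V [⋀^Fin k]→ₗ[F] F) (M₂ := V)).compr₂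
    AlternatingMap.alternatizeUncurryFinLM

/-- The derivation action `ψ ↦ ∑ᵢ ψ(…, D xᵢ, …)` of an endomorphism on alternating forms. -/
noncomputable def derivAction (D : V →ₗ[F] V) (ψ : V [⋀^Fin (k + 1)]→ₗ[F] F) :
    V [⋀^Fin (k + 1)]→ₗ[F] F :=
  AlternatingMap.alternatizeUncurryFin (ψ.curryLeft ∘ₗ D)

lemma covWedge_eq_alternatizeUncurryFin (α : Dual F V) (ψ : V [⋀^Fin k]→ₗ[F] F) :
    covWedge α ψ = AlternatingMap.alternatizeUncurryFin (α.smulRight ψ) :=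
  rfl

lemma covWedge_apply (α : Dual F V) (ψ : V [⋀^Fin k]→ₗ[F] F) (x : Fin (k + 1) → V) :
    covWedge α ψ x = ∑ i : Fin (k + 1), (-1) ^ (i : ℕ) * (α (x i) * ψ (i.removeNth x)) := by
  simp [covWedge_eq_alternatizeUncurryFin, AlternatingMap.alternatizeUncurryFin_apply, zsmul_eq_mul]

lemma derivAction_apply (D : V →ₗ[F] V) (ψ : V [⋀^Fin (k + 1)]→ₗ[F] F) (x : Fin (k + 1) → V) :
    derivAction D ψ x =
      ∑ i : Fin (k + 1), (-1) ^ (i : ℕ) * ψ (Matrix.vecCons (D (x i)) (i.removeNth x)) := by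
  simp [derivAction, AlternatingMap.alternatizeUncurryFin_apply, zsmul_eq_mul]

lemma covWedge_covWedge_self (α : Dual F V) (ψ : V [⋀^Fin k]→ₗ[F] F) :
    covWedge α (covWedge α ψ) = 0 := by
  have hcomp : AlternatingMap.alternatizeUncurryFinLM ∘ₗ (α.smulRight (α.smulRight ψ)) =
      α.smulRight (covWedge α ψ) := by
    ext x y
    simp [covWedge_eq_alternatizeUncurryFin]
  rw [covWedge_eq_alternatizeUncurryFin, ← hcomp,
    AlternatingMap.alternatizeUncurryFin_alternatizeUncurryFinLM_comp_of_symmetric]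
  intro x y
  simp [smul_smul, mul_comm]

lemma covWedge_swap (α β : Dual F V) (ψ : V [⋀^Fin k]→ₗ[F] F) :
    covWedge β (covWedge α ψ) = -covWedge α (covWedge β ψ) := by
  have h := covWedge_covWedge_self (α + β) ψ
  simp only [map_add, LinearMap.add_apply, covWedge_covWedge_self, zero_add, add_zero] at h
  exact eq_neg_of_add_eq_zero_left h

lemma covWedge_rotate {k : ℕ} (α β γ : Dual F V) (ψ : V [⋀^Fin k]→ₗ[F] F) :
    covWedge γ (covWedge α (covWedge β ψ)) = covWedge α (covWedge β (covWedge γ ψ)) := by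
  rw [covWedge_swap α γ, covWedge_swap β γ, map_neg, neg_neg]

lemma covWedge_cons {α : Dual F V} {y : Fin k → V} (hy : ∀ i, α (y i) = 0)
    (ψ : V [⋀^Fin k]→ₗ[F] F) (x : V) : covWedge α ψ (Fin.cons x y) = α x * ψ y := by
  simp [covWedge_apply, Fin.sum_univ_succ, hy]

lemma wedgeCov_apply (φ : Fin k → Dual F V) (x : Fin k → V) :
    wedgeCov k φ x = (Matrix.of fun j i ↦ φ i (x j)).det :=
  rfl

lemma wedgeCov_compLinearMap {W : Type*} [AddCommGroup W] [Module F W] (φ : Fin k → Dual F V)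
    (π : W →ₗ[F] V) : (wedgeCov k φ).compLinearMap π = wedgeCov k fun i ↦ φ i ∘ₗ π :=
  rfl

lemma wedgeCov_cons (α : Dual F V) (φ : Fin k → Dual F V) :
    wedgeCov (k + 1) (Fin.cons α φ) = covWedge α (wedgeCov k φ) := by
  ext x
  rw [wedgeCov_apply, Matrix.det_succ_column_zero, covWedge_apply]
  exact Finset.sum_congr rfl fun i _ ↦ mul_assoc _ _ _

lemma wedgeCov_four (α β γ δ : Dual F V) : wedgeCov 4 ![α, β, γ, δ] =
    covWedge α (covWedge β (covWedge γ (covWedge δ (wedgeCov 0 ![])))) := by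
  simp only [← wedgeCov_cons]
  rfl

lemma wedgeCov_eq_zero_of_eq {φ : Fin k → Dual F V} {i j : Fin k} (hφ : φ i = φ j) (hij : i ≠ j) :
    wedgeCov k φ = 0 := by
  ext x
  exact Matrix.det_zero_of_column_eq hij fun l ↦ congrArg (· (x l)) hφ

lemma covWedge_factor_wedgeCov {φ : Fin k → Dual F V} (i : Fin k) :
    covWedge (φ i) (wedgeCov k φ) = 0 := by
  rw [← wedgeCov_cons]
  exact wedgeCov_eq_zero_of_eq (i := 0) (j := i.succ) rfl (Fin.succ_ne_zero i).symm

lemma wedgeCov_dual_apply_self {ι : Type*} [DecidableEq ι] {f : ι → Dual F V} {e : ι → V}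
    (hf : ∀ i j, f i (e j) = if i = j then 1 else 0) {v : Fin k → ι} (hv : Function.Injective v) :
    wedgeCov k (f ∘ v) (e ∘ v) = 1 := by
  rw [wedgeCov_apply, ← Matrix.det_one (n := Fin k)]
  congr 1
  ext i j
  simp [hf, Matrix.one_apply, hv.eq_iff, eq_comm]

lemma covWedge_congr_of_restrict_eq [Module.Finite F V] {n : Dual F V} {ψ χ : V [⋀^Fin k]→ₗ[F] F}
    (h : ψ.compLinearMap (LinearMap.ker n).subtype = χ.compLinearMap (LinearMap.ker n).subtype) :
    covWedge n ψ = covWedge n χ := by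
  obtain rfl | hn := eq_or_ne n 0
  · simp
  obtain ⟨e, he⟩ := LinearMap.surjective hn 1
  let b := Basis.mkFinCons e (finBasis F (LinearMap.ker n))
    (fun c x hx hcx ↦ by simpa [LinearMap.mem_ker.1 hx, he] using congrArg n hcx)
    (fun z ↦ ⟨-n z, by simp [he]⟩)
  have hb : ∀ j, j ≠ 0 → n (b j) = 0 := by
    intro j hj
    obtain ⟨j, rfl⟩ := Fin.exists_succ_eq.2 hj
    simp [b]
  refine b.ext_alternating fun v hv ↦ ?_
  rw [covWedge_apply, covWedge_apply]
  refine Finset.sum_congr rfl fun i _ ↦ ?_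
  by_cases hi : v i = 0
  · have hker : ∀ j, n (b (v (i.succAbove j))) = 0 :=
      fun j ↦ hb _ fun hj ↦ i.succAbove_ne j (hv (hj.trans hi.symm))
    have heq : ψ (i.removeNth fun l ↦ b (v l)) = χ (i.removeNth fun l ↦ b (v l)) :=
      congrFun (congrArg DFunLike.coe h) fun j ↦ ⟨b (v (i.succAbove j)), hker j⟩
    rw [heq]
  · simp [hb _ hi]

end ExteriorAlgebra

section ClosedForms

variable {F : Type*} [Field F] {g : Type*} [LieRing g] {k : ℕ}

lemma ceDiff_apply (ρ : (Fin (k + 1) → g) → F) (x : Fin (k + 2) → g) :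
    ceDiff k ρ x = -∑ i : Fin (k + 1), ∑ j ≥ i, (-1) ^ (i + j : ℕ) *
      ρ (Fin.cons ⁅x i.castSucc, x j.succ⁆ (j.removeNth (i.castSucc.removeNth x))) := by
  have hlast : ∀ j : Fin (k + 2), ¬ ((Fin.last (k + 1) : Fin (k + 2)) : ℕ) < j :=
    fun j ↦ by simp [Nat.lt_succ_iff.1 j.isLt]
  rw [ceDiff, Fin.sum_univ_castSucc, ← Finset.sum_neg_distrib]
  simp only [hlast, dite_false, Finset.sum_const_zero, add_zero]
  refine Finset.sum_congr rfl fun i _ ↦ ?_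
  rw [Fin.sum_univ_succ, dif_neg (by simp), zero_add, ← Finset.sum_neg_distrib,
    ← Finset.sum_subset (Finset.subset_univ (Finset.Ici i))
      fun j _ hj ↦ dif_neg (by simpa [Nat.lt_succ_iff] using hj)]
  refine Finset.sum_congr rfl fun j hj ↦ ?_
  have hij : i ≤ j := Finset.mem_Ici.1 hj
  have hremove : (fun l ↦ x (j.succ.succAbove (i.succAbove l))) =
      j.removeNth (i.castSucc.removeNth x) := by
    rw [Fin.removeNth_removeNth_eq_swap]
    funext l
    simp [Fin.removeNth, Fin.predAbove, Fin.succAbove_of_le_castSucc, hij, hij.not_gt]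
  simp [hij, ← hremove, pow_succ, ← add_assoc]

variable [LieAlgebra F g]

lemma ceDiff_eq_neg_covWedge_derivAction (n : Dual F g) (D : g →ₗ[F] g)
    (hD : ∀ x y : g, ⁅x, y⁆ = n x • D y - n y • D x) (Φ : g [⋀^Fin (k + 1)]→ₗ[F] F) :
    ceDiff k Φ = -covWedge n (derivAction D Φ) := by
  have hcomp : AlternatingMap.alternatizeUncurryFinLM ∘ₗ (n.smulRight (Φ.curryLeft ∘ₗ D)) =
      n.smulRight (derivAction D Φ) := by
    ext x y
    simp [derivAction]
  have hcons : ∀ y z v, Φ (Fin.cons ⁅y, z⁆ v) =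
      n y * Φ (Fin.cons (D z) v) - n z * Φ (Fin.cons (D y) v) := by
    intro y z v
    change Φ.curryLeft ⁅y, z⁆ v = n y * Φ.curryLeft (D z) v - n z * Φ.curryLeft (D y) v
    rw [hD, map_sub, map_smul, map_smul]
    rfl
  ext x
  rw [covWedge_eq_alternatizeUncurryFin, ← hcomp, Pi.neg_apply,
    AlternatingMap.alternatizeUncurryFin_alternatizeUncurryFinLM_comp_apply, ceDiff_apply]
  simp [hcons, zsmul_eq_mul, Matrix.vecCons]

lemma ceDiff_congr_of_abelian_ideal [Module.Finite F g] {u : LieIdeal F g}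
    (habel : ∀ x ∈ u, ∀ y ∈ u, ⁅x, y⁆ = 0) {n : Dual F g} (hn : LinearMap.ker n = u.toSubmodule)
    {e : g} (he : n e = 1) {Φ Ψ : g [⋀^Fin (k + 1)]→ₗ[F] F}
    (h : Φ.compLinearMap (LinearMap.ker n).subtype = Ψ.compLinearMap (LinearMap.ker n).subtype) :
    ceDiff k Φ = ceDiff k Ψ := by
  have hker : ∀ x, x ∈ LinearMap.ker n ↔ x ∈ u := fun x ↦ by rw [hn, LieSubmodule.mem_toSubmodule]
  have hbracket : ∀ x y : g,
      ⁅x, y⁆ = n x • LieAlgebra.ad F g e y - n y • LieAlgebra.ad F g e x := by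
    intro x y
    have hxy : ⁅x - n x • e, y - n y • e⁆ = 0 :=
      habel _ ((hker _).1 (by simp [he])) _ ((hker _).1 (by simp [he]))
    simp only [sub_lie, lie_sub, smul_lie, lie_smul, lie_self, smul_zero, sub_zero] at hxy
    rw [sub_sub, sub_eq_zero] at hxy
    rw [hxy, LieAlgebra.ad_apply, LieAlgebra.ad_apply, ← lie_skew x e]
    module
  have heq : ∀ x : Fin (k + 1) → g, (∀ i, x i ∈ LinearMap.ker n) → Φ x = Ψ x := fun x hx ↦
    congrFun (congrArg DFunLike.coe h) fun i ↦ ⟨x i, hx i⟩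
  rw [ceDiff_eq_neg_covWedge_derivAction n _ hbracket,
    ceDiff_eq_neg_covWedge_derivAction n _ hbracket]
  congr 2
  refine covWedge_congr_of_restrict_eq (AlternatingMap.ext fun x ↦ ?_)
  rw [AlternatingMap.compLinearMap_apply, AlternatingMap.compLinearMap_apply, derivAction_apply,
    derivAction_apply]
  refine Finset.sum_congr rfl fun i _ ↦ ?_
  congr 1
  exact heq _ (Fin.cases ((hker _).2 (lie_mem_right F g u _ _ ((hker _).1 (x i).2))) fun j ↦
    (x _).2)

end ClosedForms

section DualBasis

variable {F : Type*} [Field F] {V : Type*} [AddCommGroup V] [Module F V] {k : ℕ}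
  {ι : Type*}

lemma exists_predual_basis [Finite ι] [DecidableEq ι] [Module.Finite F V]
    (f : Basis ι F (Dual F V)) :
    ∃ e : Basis ι F V, ∀ i j, f i (e j) = if i = j then 1 else 0 := by
  refine ⟨f.dualBasis.map (evalEquiv F V).symm, fun i j ↦ ?_⟩
  rw [Basis.map_apply, apply_evalEquiv_symm_apply, Basis.dualBasis_apply_self]

lemma eq_zero_of_covWedge_covWedge_eq_zero [Fintype ι] [Module.Finite F V]
    (f : Basis ι F (Dual F V))
    (hι : Fintype.card ι = k + 2) {X : V [⋀^Fin k]→ₗ[F] F}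
    (hX : ∀ p q, p ≠ q → covWedge (f p) (covWedge (f q) X) = 0) : X = 0 := by
  classical
  obtain ⟨e, he⟩ := exists_predual_basis f
  refine e.ext_alternating fun v hv ↦ ?_
  have hcard : 1 < (Finset.univ.image v)ᶜ.card := by
    rw [Finset.card_compl, Finset.card_image_of_injective _ hv, hι, Finset.card_fin]
    omega
  obtain ⟨p, hp, q, hq, hpq⟩ := Finset.one_lt_card.1 hcard
  have hmiss : ∀ r ∈ (Finset.univ.image v)ᶜ, ∀ i, f r (e (v i)) = 0 := by
    intro r hr i
    simp only [Finset.mem_compl, Finset.mem_image, Finset.mem_univ, true_and, not_exists] at hr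
    rw [he, if_neg (Ne.symm (hr i))]
  have heval := congrArg (fun Y ↦ Y (Fin.cons (e p) (Fin.cons (e q) fun i ↦ e (v i))))
    (hX p q hpq)
  rw [AlternatingMap.zero_apply, covWedge_cons, covWedge_cons (hmiss q hq)] at heval
  · simpa [he] using heval
  · exact Fin.cases (by simp [he, hpq]) (hmiss p hp)

end DualBasis

section Darboux

variable {F : Type*} [Field F] {W : Type*} [AddCommGroup W] [Module F W]

lemma finrank_ker_prod_add_two [Module.Finite F W] {B : W →ₗ[F] W →ₗ[F] F} (hB : B.IsAlt)
    {x y : W} (hxy : B x y = 1) :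
    finrank F (LinearMap.ker ((B x).prod (B y))) + 2 = finrank F W := by
  have hsurj : Function.Surjective ((B x).prod (B y)) := fun a ↦
    ⟨a.1 • y - a.2 • x, by ext <;> simp [hxy, hB.self_eq_zero, ← hB.neg x y]⟩
  rw [← LinearMap.finrank_range_add_finrank_ker ((B x).prod (B y)),
    LinearMap.range_eq_top.2 hsurj, finrank_top, finrank_prod, finrank_self, add_comm]

lemma linearIndependent_cons_pair {B : W →ₗ[F] W →ₗ[F] F} (hB : B.IsAlt) {x y : W}
    (hxy : B x y = 1) {n : ℕ} {z : Fin n × Fin 2 → W} (hz : LinearIndependent F z)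
    (hx : ∀ p, B x (z p) = 0) (hy : ∀ p, B y (z p) = 0) :
    LinearIndependent F fun p : Fin (n + 1) × Fin 2 ↦
      (Fin.cons (![x, y] p.2) (fun i ↦ z (i, p.2)) : Fin (n + 1) → W) p.1 := by
  have hyx : B y x = -1 := by rw [← hB.neg, hxy]
  rw [Fintype.linearIndependent_iff] at hz ⊢
  intro c hc
  simp only [Fintype.sum_prod_type, Fin.sum_univ_succ (n := n), Fin.cons_zero, Fin.cons_succ,
    Fin.sum_univ_two, Matrix.cons_val_zero, Matrix.cons_val_one] at hc
  have h1 : c (0, 1) = 0 := by simpa [hB.self_eq_zero, hxy, hx] using congrArg (B x) hc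
  have h0 : c (0, 0) = 0 := by simpa [hB.self_eq_zero, hyx, hy] using congrArg (B y) hc
  have hsucc := hz (fun p ↦ c (p.1.succ, p.2))
    (by simpa [Fintype.sum_prod_type, h0, h1] using hc)
  rintro ⟨i, a⟩
  refine Fin.cases ?_ (fun i ↦ hsucc (i, a)) i
  fin_cases a
  exacts [h0, h1]

lemma exists_basis_pairs_of_isAlt [Module.Finite F W] {n : ℕ} (hW : finrank F W = n * 2)
    {B : W →ₗ[F] W →ₗ[F] F} (hB : B.IsAlt) :
    ∃ f : Basis (Fin n × Fin 2) F W, ∀ p q, p.1 ≠ q.1 → B (f p) (f q) = 0 := by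
  induction n generalizing W with
  | zero =>
    exact ⟨(finBasisOfFinrankEq F W hW).reindex (Fintype.equivOfCardEq (by simp)),
      fun p ↦ p.1.elim0⟩
  | succ n ih =>
    by_cases hB0 : ∀ x y, B x y = 0
    · exact ⟨(finBasisOfFinrankEq F W hW).reindex (Fintype.equivOfCardEq (by simp)),
        fun p q _ ↦ hB0 _ _⟩
    push Not at hB0
    obtain ⟨x, y', hy'⟩ := hB0
    obtain ⟨y, hxy⟩ : ∃ y, B x y = 1 := ⟨(B x y')⁻¹ • y', by simp [hy']⟩
    let K := LinearMap.ker ((B x).prod (B y))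
    have hK : ∀ z : K, B x z = 0 ∧ B y z = 0 := fun z ↦ Prod.mk_eq_zero.1 z.2
    have hfinrank : finrank F K + 2 = finrank F W := finrank_ker_prod_add_two hB hxy
    obtain ⟨f, hf⟩ := ih (W := K) (by omega) (B := B.domRestrict₁₂ K K) (fun z ↦ hB z)
    have hli := linearIndependent_cons_pair hB hxy
      (f.linearIndependent.map' K.subtype K.ker_subtype) (fun p ↦ (hK _).1) (fun p ↦ (hK _).2)
    have hpair : ∀ (a : Fin 2) (z : K), B (![x, y] a) z = 0 := by
      intro a z
      fin_cases a
      exacts [(hK z).1, (hK z).2]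
    refine ⟨basisOfLinearIndependentOfCardEqFinrank hli (by simp [hW]), ?_⟩
    rw [coe_basisOfLinearIndependentOfCardEqFinrank]
    rintro ⟨i, a⟩ ⟨j, b⟩ hij
    induction i using Fin.cases with
    | zero =>
      obtain ⟨j, rfl⟩ := Fin.exists_succ_eq.2 (Ne.symm hij)
      exact hpair a _
    | succ i =>
      induction j using Fin.cases with
      | zero => exact hB.isRefl _ _ (hpair b _)
      | succ j => exact hf (i, a) (j, b) fun h ↦ hij (congrArg Fin.succ h)

end Darboux

section SixDim

variable {F : Type*} [Field F] {U : Type*} [AddCommGroup U] [Module F U]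

/-- For a family `f` of three pairs of covectors, with two-forms `ωⱼ = f (j, 0) ∧ f (j, 1)`, this is
the four-form `ωᵢ₊₁ ∧ ωᵢ₊₂`, with indices modulo `3`. -/
noncomputable def pairWedge (f : Fin 3 × Fin 2 → Dual F U) (i : Fin 3) : U [⋀^Fin 4]→ₗ[F] F :=
  wedgeCov 4 ![f (i + 1, 0), f (i + 1, 1), f (i + 2, 0), f (i + 2, 1)]

lemma covWedge_pairWedge (f : Fin 3 × Fin 2 → Dual F U) {i j : Fin 3} (hij : i ≠ j) (a : Fin 2) :
    covWedge (f (j, a)) (pairWedge f i) = 0 := by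
  obtain ⟨l, hl⟩ : ∃ l, f (j, a) =
      ![f (i + 1, 0), f (i + 1, 1), f (i + 2, 0), f (i + 2, 1)] l := by
    revert i j a
    simp [Fin.forall_fin_succ, Fin.exists_fin_succ]
  rw [hl]
  exact covWedge_factor_wedgeCov l

lemma covWedge_covWedge_pairWedge_ne_zero [Module.Finite F U]
    (f : Basis (Fin 3 × Fin 2) F (Dual F U)) (i : Fin 3) :
    covWedge (f (i, 0)) (covWedge (f (i, 1)) (pairWedge f i)) ≠ 0 := by
  obtain ⟨e, he⟩ := exists_predual_basis f
  let τ : Fin 6 → Fin 3 × Fin 2 :=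
    ![(i, 0), (i, 1), (i + 1, 0), (i + 1, 1), (i + 2, 0), (i + 2, 1)]
  have hτ : Function.Injective τ := by fin_cases i <;> decide
  have hτf : f ∘ τ = Fin.cons (f (i, 0)) (Fin.cons (f (i, 1))
      ![f (i + 1, 0), f (i + 1, 1), f (i + 2, 0), f (i + 2, 1)]) := by
    funext l
    fin_cases l <;> rfl
  intro h
  have hzero : wedgeCov 6 (f ∘ τ) = 0 := by
    rw [hτf, wedgeCov_cons, wedgeCov_cons, ← pairWedge, h]
  have hone : wedgeCov 6 (f ∘ τ) (e ∘ τ) = 1 :=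
    wedgeCov_dual_apply_self (f := f) (e := e) he hτ
  rw [hzero] at hone
  exact zero_ne_one hone

lemma exists_smul_eq_of_top_form {ι : Type*} [Finite ι] (e : Basis ι F U)
    {X : U [⋀^ι]→ₗ[F] F} (hX : X ≠ 0) (Y : U [⋀^ι]→ₗ[F] F) : ∃ d : F, Y = d • X := by
  classical
  have := Fintype.ofFinite ι
  have hXe : X e ≠ 0 := (X.map_basis_ne_zero_iff e).2 hX
  refine ⟨Y e / X e, ?_⟩
  rw [Y.eq_smul_basis_det e, X.eq_smul_basis_det e]
  simp [smul_smul, hXe, Basis.det_self]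

lemma exists_basis_forall_covWedge_covWedge_eq_zero (hU : finrank F U = 6)
    (Θ : U [⋀^Fin 4]→ₗ[F] F) : ∃ f : Basis (Fin 3 × Fin 2) F (Dual F U),
      ∀ p q, p.1 ≠ q.1 → covWedge (f p) (covWedge (f q) Θ) = 0 := by
  have : Module.Finite F U := finite_of_finrank_pos (by omega)
  let e : Basis (Fin 6) F U := finBasisOfFinrankEq F U hU
  let B : Dual F U →ₗ[F] Dual F U →ₗ[F] F := LinearMap.mk₂ F
    (fun α β ↦ covWedge α (covWedge β Θ) e) (by simp) (by simp) (by simp) (by simp)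
  have hB : B.IsAlt := fun α ↦ by simp [B, covWedge_covWedge_self]
  obtain ⟨f, hf⟩ := exists_basis_pairs_of_isAlt (n := 3)
    (by rw [Subspace.dual_finrank_eq, hU]) hB
  exact ⟨f, fun p q hpq ↦ (AlternatingMap.map_basis_eq_zero_iff e _).1 (hf p q hpq)⟩

theorem exists_eq_sum_smul_pairWedge (hU : finrank F U = 6) (Θ : U [⋀^Fin 4]→ₗ[F] F) :
    ∃ (f : Basis (Fin 3 × Fin 2) F (Dual F U)) (d : Fin 3 → F),
      Θ = ∑ i, d i • pairWedge f i := by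
  have : Module.Finite F U := finite_of_finrank_pos (by omega)
  obtain ⟨f, hf⟩ := exists_basis_forall_covWedge_covWedge_eq_zero hU Θ
  choose d hd using fun i ↦ exists_smul_eq_of_top_form (finBasisOfFinrankEq F U hU)
    (covWedge_covWedge_pairWedge_ne_zero f i) (covWedge (f (i, 0)) (covWedge (f (i, 1)) Θ))
  refine ⟨f, d, sub_eq_zero.1 (eq_zero_of_covWedge_covWedge_eq_zero f (by simp) ?_)⟩
  have hsum : ∀ j a b, covWedge (f (j, a)) (covWedge (f (j, b)) (∑ i, d i • pairWedge f i)) =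
      d j • covWedge (f (j, a)) (covWedge (f (j, b)) (pairWedge f j)) := by
    intro j a b
    simp only [map_sum, map_smul]
    rw [Finset.sum_eq_single_of_mem j (Finset.mem_univ j)]
    intro i _ hij
    rw [covWedge_pairWedge _ hij, map_zero, smul_zero]
  have h01 : ∀ j, covWedge (f (j, 0)) (covWedge (f (j, 1)) (Θ - ∑ i, d i • pairWedge f i)) = 0 :=
    fun j ↦ by rw [map_sub, map_sub, hd, hsum, sub_self]
  rintro ⟨i, a⟩ ⟨j, b⟩ hne
  obtain hij | rfl := ne_or_eq i j
  · rw [map_sub, map_sub, hf _ _ hij, zero_sub, neg_eq_zero]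
    simp only [map_sum, map_smul]
    refine Finset.sum_eq_zero fun l _ ↦ ?_
    obtain hl | rfl := ne_or_eq l j
    · rw [covWedge_pairWedge _ hl, map_zero, smul_zero]
    · rw [covWedge_swap, covWedge_pairWedge _ hij.symm, map_zero, neg_zero, smul_zero]
  · fin_cases a <;> fin_cases b
    · exact absurd rfl hne
    · exact h01 i
    · rw [covWedge_swap]
      exact neg_eq_zero.2 (h01 i)
    · exact absurd rfl hne

lemma altDec_smul_wedgeCov {k : ℕ} (c : F) (φ : Fin (k + 1) → Dual F U) :
    AltDec (k + 1) (c • wedgeCov (k + 1) φ) := by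
  refine ⟨Fin.cons (c • φ 0) (Fin.tail φ), ?_⟩
  rw [wedgeCov_cons, map_smul, LinearMap.smul_apply, ← wedgeCov_cons, Fin.cons_self_tail]

lemma pairWedge_smul_fst (f : Fin 3 × Fin 2 → Dual F U) (s : Fin 3 → F) (i : Fin 3) :
    pairWedge (fun p ↦ (![s p.1, 1] : Fin 2 → F) p.2 • f p) i =
      (s (i + 1) * s (i + 2)) • pairWedge f i := by
  simp only [pairWedge, wedgeCov_four, Matrix.cons_val_zero, Matrix.cons_val_one, one_smul,
    map_smul, LinearMap.smul_apply, smul_smul, mul_comm]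

lemma altDec_sum_smul_pairWedge {d : Fin 3 → F} (hd : ∀ i, d (i + 1) = 0 ∨ d (i + 2) = 0)
    (f : Fin 3 × Fin 2 → Dual F U) : AltDec 4 (∑ i, d i • pairWedge f i) := by
  obtain ⟨i, hi⟩ : ∃ i, ∀ j ≠ i, d j = 0 := by
    by_cases hd0 : ∀ i, d i = 0
    · exact ⟨0, fun j _ ↦ hd0 j⟩
    obtain ⟨i, hi⟩ := not_forall.1 hd0
    refine ⟨i, fun j hj ↦ ?_⟩
    obtain ⟨l, ⟨rfl, rfl⟩ | ⟨rfl, rfl⟩⟩ : ∃ l : Fin 3, i = l + 1 ∧ j = l + 2 ∨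
        j = l + 1 ∧ i = l + 2 := by
      clear hi
      revert i j
      decide
    · exact (hd l).resolve_left hi
    · exact (hd l).resolve_right hi
  rw [Finset.sum_eq_single_of_mem i (Finset.mem_univ i) fun j _ hj ↦ by rw [hi j hj, zero_smul]]
  exact altDec_smul_wedgeCov _ _

lemma exists_mul_eq_of_forall_isSquare (hsq : ∀ a : F, IsSquare a) {d : Fin 3 → F}
    (hd : ∀ i, d i ≠ 0) : ∃ s : Fin 3 → F, ∀ i, s (i + 1) * s (i + 2) = d i := by
  obtain ⟨r, hr⟩ := hsq (d 1 * d 2 / d 0)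
  have hr0 : r ≠ 0 := fun h ↦ by simp [h, hd] at hr
  refine ⟨![r, d 2 / r, d 1 / r], Fin.forall_fin_succ.2 ⟨?_, Fin.forall_fin_two.2 ⟨?_, ?_⟩⟩⟩
  · change d 2 / r * (d 1 / r) = d 0
    rw [div_mul_div_comm, ← hr, mul_comm (d 2), div_div_cancel₀ (mul_ne_zero (hd 1) (hd 2))]
  · exact div_mul_cancel₀ _ hr0
  · exact mul_div_cancel₀ _ hr0

lemma exists_basis_pairWedge_eq_smul (hsq : ∀ a : F, IsSquare a)
    (f : Basis (Fin 3 × Fin 2) F (Dual F U)) (i : Fin 3) {d : Fin 3 → F} (hd : ∀ j, d j ≠ 0) :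
    ∃ f' : Basis (Fin 3 × Fin 2) F (Dual F U),
      ∀ j, pairWedge f' j = d j • pairWedge f (j + i) := by
  obtain ⟨s, hs⟩ := exists_mul_eq_of_forall_isSquare hsq hd
  have hs0 : ∀ j, s j ≠ 0 := fun j ↦ by
    simpa using left_ne_zero_of_mul ((hs (j - 1)).trans_ne (hd (j - 1)))
  have hunit : ∀ p : Fin 3 × Fin 2, IsUnit ((![s p.1, 1] : Fin 2 → F) p.2) := by
    simp [Prod.forall, Fin.forall_fin_two, hs0]
  let shifted := f.reindex ((Equiv.addRight i).symm.prodCongr (Equiv.refl (Fin 2)))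
  refine ⟨shifted.isUnitSMul hunit, fun j ↦ ?_⟩
  have hcoe : ⇑(shifted.isUnitSMul hunit) = fun p ↦ (![s p.1, 1] : Fin 2 → F) p.2 • shifted p :=
    funext fun p ↦ shifted.isUnitSMul_apply hunit p
  rw [hcoe, pairWedge_smul_fst, hs]
  simp [pairWedge, shifted, add_right_comm]

theorem exists_eq_pairWedge_add_of_not_altDec (hsq : ∀ a : F, IsSquare a) (hU : finrank F U = 6)
    {Θ : U [⋀^Fin 4]→ₗ[F] F} (hΘ : ¬ AltDec 4 Θ) : ∃ f : Basis (Fin 3 × Fin 2) F (Dual F U),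
      Θ = pairWedge f 1 + pairWedge f 2 ∨ Θ = pairWedge f 0 + pairWedge f 1 + pairWedge f 2 := by
  obtain ⟨f, d, rfl⟩ := exists_eq_sum_smul_pairWedge hU Θ
  obtain ⟨i, hi1, hi2⟩ : ∃ i, d (i + 1) ≠ 0 ∧ d (i + 2) ≠ 0 := by
    contrapose! hΘ
    exact altDec_sum_smul_pairWedge (fun i ↦ or_iff_not_imp_left.2 (hΘ i)) f
  rw [← Equiv.sum_comp (Equiv.addLeft i), Fin.sum_univ_three]
  simp only [Equiv.coe_addLeft, add_zero]
  by_cases hi0 : d i = 0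
  · obtain ⟨f', hf'⟩ := exists_basis_pairWedge_eq_smul hsq f i (d := ![1, d (i + 1), d (i + 2)])
      (by simp [Fin.forall_fin_succ, hi1, hi2])
    exact ⟨f', .inl (by simp [hf', hi0, add_comm i])⟩
  · obtain ⟨f', hf'⟩ := exists_basis_pairWedge_eq_smul hsq f i (d := ![d i, d (i + 1), d (i + 2)])
      (by simp [Fin.forall_fin_succ, hi0, hi1, hi2])
    exact ⟨f', .inr (by simp [hf', add_comm i])⟩

end SixDim

section G2DualForm

variable {F : Type*} [Field F] {V : Type*} [AddCommGroup V] [Module F V]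

/-- The polynomial expression defining `stdG2`, for seven covectors which need not form a basis, so
that it can be pulled back to subspaces. -/
noncomputable def g2DualForm (φ : Fin 7 → Dual F V) : V [⋀^Fin 4]→ₗ[F] F :=
  wedgeCov 4 ![φ 0, φ 1, φ 2, φ 3] + wedgeCov 4 ![φ 0, φ 1, φ 4, φ 5] +
    wedgeCov 4 ![φ 2, φ 3, φ 4, φ 5] - wedgeCov 4 ![φ 1, φ 3, φ 5, φ 6] +
    wedgeCov 4 ![φ 1, φ 2, φ 4, φ 6] + wedgeCov 4 ![φ 0, φ 3, φ 4, φ 6] +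
    wedgeCov 4 ![φ 0, φ 2, φ 5, φ 6]

lemma stdG2_eq_g2DualForm (b : Basis (Fin 7) F (Dual F V)) : stdG2 b = g2DualForm b :=
  rfl

lemma wedgeCov_four_compLinearMap {W : Type*} [AddCommGroup W] [Module F W]
    (α β γ δ : Dual F V) (π : W →ₗ[F] V) :
    (wedgeCov 4 ![α, β, γ, δ]).compLinearMap π =
      wedgeCov 4 ![α ∘ₗ π, β ∘ₗ π, γ ∘ₗ π, δ ∘ₗ π] := by
  rw [wedgeCov_compLinearMap]
  congr 1
  funext l
  fin_cases l <;> rfl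

lemma g2DualForm_compLinearMap {W : Type*} [AddCommGroup W] [Module F W] (φ : Fin 7 → Dual F V)
    (π : W →ₗ[F] V) : (g2DualForm φ).compLinearMap π = g2DualForm fun i ↦ φ i ∘ₗ π := by
  simp only [g2DualForm, ← wedgeCov_four_compLinearMap]
  rfl

lemma g2DualForm_eq_pairWedge_add_three (f : Fin 3 × Fin 2 → Dual F V) :
    g2DualForm ![f (0, 0), f (0, 1), f (1, 0), f (1, 1), f (2, 0), f (2, 1), 0] =
      pairWedge f 0 + pairWedge f 1 + pairWedge f 2 := by
  have hpairs : wedgeCov 4 ![f (0, 0), f (0, 1), f (2, 0), f (2, 1)] =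
      wedgeCov 4 ![f (2, 0), f (2, 1), f (0, 0), f (0, 1)] := by
    rw [wedgeCov_four, wedgeCov_four, ← covWedge_rotate, ← covWedge_rotate _ _ (f (2, 1))]
  have hzero : ∀ α β γ : Dual F V, wedgeCov 4 ![α, β, γ, 0] = 0 := by simp [wedgeCov_four]
  simp only [g2DualForm, pairWedge, Matrix.cons_val_zero, Matrix.cons_val_one, Matrix.cons_val,
    Fin.reduceAdd, zero_add, hpairs, hzero, sub_zero, add_zero]
  abel

lemma g2DualForm_eq_pairWedge_add_two {i : F} (hi : i * i = -1)
    (f : Fin 3 × Fin 2 → Dual F V) :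
    g2DualForm ![f (1, 0), i • f (1, 0), f (2, 0), f (0, 0) - i • f (2, 0),
      f (0, 1) + i • f (2, 1), f (2, 1), f (1, 1)] = pairWedge f 1 + pairWedge f 2 := by
  have h1 : wedgeCov 4 ![f (2, 0), f (0, 0), f (0, 1), f (2, 1)] = pairWedge f 1 := by
    simp only [pairWedge, wedgeCov_four]
    exact congrArg (covWedge (f (2, 0))) (covWedge_rotate _ _ _ _).symm
  have h2 : wedgeCov 4 ![f (1, 0), f (0, 0), f (0, 1), f (1, 1)] = pairWedge f 2 := by
    simp only [pairWedge, wedgeCov_four]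
    exact covWedge_rotate _ _ _ _
  rw [← h1, ← h2]
  simp only [g2DualForm, wedgeCov_four]
  simp only [Matrix.cons_val_zero, Matrix.cons_val_one, Matrix.cons_val, map_add, map_sub, map_neg,
    map_smul, LinearMap.add_apply, LinearMap.sub_apply, LinearMap.smul_apply,
    covWedge_covWedge_self, smul_sub, smul_smul, hi, neg_smul, one_smul, smul_zero,
    sub_zero, add_zero, zero_add]
  abel

end G2DualForm

section Hyperplane

variable {F : Type*} [Field F] {V : Type*} [AddCommGroup V] [Module F V] {n : Dual F V}

lemma exists_basis_dual_extend [Module.Finite F V] (hn : n ≠ 0) {k : ℕ}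
    (f : Basis (Fin k) F (Dual F (LinearMap.ker n))) : ∃ b : Basis (Fin (k + 1)) F (Dual F V),
      b 0 = n ∧ ∀ i : Fin k, b i.succ ∘ₗ (LinearMap.ker n).subtype = f i := by
  choose h hh using fun i ↦ (f i).exists_extend
  have hli : LinearIndependent F (Fin.cons n h : Fin (k + 1) → Dual F V) := by
    rw [Fintype.linearIndependent_iff]
    intro c hc
    rw [Fin.sum_univ_succ] at hc
    simp only [Fin.cons_zero, Fin.cons_succ] at hc
    have hsum : ∑ i : Fin k, c i.succ • f i = 0 := by
      ext x
      have hx : n x = 0 := x.2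
      simpa [← hh, hx] using LinearMap.congr_fun hc x
    have hsucc := Fintype.linearIndependent_iff.1 f.linearIndependent _ hsum
    refine Fin.cases ?_ hsucc
    simpa [hsucc, hn] using hc
  have hcard : Fintype.card (Fin (k + 1)) = finrank F (Dual F V) := by
    rw [Subspace.dual_finrank_eq, ← Dual.finrank_ker_add_one_of_ne_zero hn,
      ← Subspace.dual_finrank_eq, finrank_eq_card_basis f, Fintype.card_fin, Fintype.card_fin]
  refine ⟨basisOfLinearIndependentOfCardEqFinrank hli hcard, ?_, fun i ↦ ?_⟩
  · simp
  · simp [hh]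

lemma exists_basis_dual_extend_pairs [Module.Finite F V] (hn : n ≠ 0)
    (f : Basis (Fin 3 × Fin 2) F (Dual F (LinearMap.ker n))) :
    ∃ b : Basis (Fin 7) F (Dual F V), ∀ j, b j ∘ₗ (LinearMap.ker n).subtype =
      ![0, f (0, 0), f (0, 1), f (1, 0), f (1, 1), f (2, 0), f (2, 1)] j := by
  obtain ⟨b, hb0, hb⟩ := exists_basis_dual_extend hn (f.reindex finProdFinEquiv)
  refine ⟨b, Fin.cases ?_ fun j ↦ ?_⟩
  · rw [hb0]
    exact LinearMap.ext fun x ↦ x.2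
  · rw [hb, Basis.reindex_apply]
    fin_cases j <;> rfl

lemma exists_stdG2_restrict_eq_pairWedge_add_three [Module.Finite F V] (hn : n ≠ 0)
    (f : Basis (Fin 3 × Fin 2) F (Dual F (LinearMap.ker n))) :
    ∃ b : Basis (Fin 7) F (Dual F V), (stdG2 b).compLinearMap (LinearMap.ker n).subtype =
      pairWedge f 0 + pairWedge f 1 + pairWedge f 2 := by
  obtain ⟨b, hb⟩ := exists_basis_dual_extend_pairs hn f
  refine ⟨b.reindex (Equiv.addRight 1).symm, ?_⟩
  rw [stdG2_eq_g2DualForm, g2DualForm_compLinearMap, ← g2DualForm_eq_pairWedge_add_three]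
  congr 1
  funext j
  rw [Basis.reindex_apply, hb]
  fin_cases j <;> rfl

lemma linearIndependent_shear {W : Type*} [AddCommGroup W] [Module F W]
    (b : Basis (Fin 7) F W) (i : F) : LinearIndependent F
      ![b 3, i • b 3 + b 0, b 5, b 1 - i • b 5, b 2 + i • b 6, b 6, b 4] := by
  rw [Fintype.linearIndependent_iff]
  intro c hc
  have hcoord := Fintype.linearIndependent_iff.1 b.linearIndependent
    ![c 1, c 3, c 4, c 0 + i * c 1, c 6, c 2 - i * c 3, c 5 + i * c 4] (by
      rw [← hc]
      simp only [Fin.sum_univ_seven, Matrix.cons_val_zero, Matrix.cons_val_one, Matrix.cons_val]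
      module)
  obtain ⟨h1, h3, h4, h0, h6, h2, h5⟩ : c 1 = 0 ∧ c 3 = 0 ∧ c 4 = 0 ∧ c 0 + i * c 1 = 0 ∧
      c 6 = 0 ∧ c 2 - i * c 3 = 0 ∧ c 5 + i * c 4 = 0 := by
    simpa [Fin.forall_fin_succ] using hcoord
  rw [h1, mul_zero, add_zero] at h0
  rw [h3, mul_zero, sub_zero] at h2
  rw [h4, mul_zero, add_zero] at h5
  simp [Fin.forall_fin_succ, h0, h1, h2, h3, h4, h5, h6]

lemma exists_stdG2_restrict_eq_pairWedge_add_two [Module.Finite F V] {i : F} (hi : i * i = -1)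
    (hn : n ≠ 0) (f : Basis (Fin 3 × Fin 2) F (Dual F (LinearMap.ker n))) :
    ∃ b : Basis (Fin 7) F (Dual F V), (stdG2 b).compLinearMap (LinearMap.ker n).subtype =
      pairWedge f 1 + pairWedge f 2 := by
  obtain ⟨b, hb⟩ := exists_basis_dual_extend_pairs hn f
  refine ⟨basisOfLinearIndependentOfCardEqFinrank (linearIndependent_shear b i)
    (finrank_eq_card_basis b).symm, ?_⟩
  rw [stdG2_eq_g2DualForm, g2DualForm_compLinearMap, ← g2DualForm_eq_pairWedge_add_two hi]
  congr 1
  funext j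
  rw [coe_basisOfLinearIndependentOfCardEqFinrank]
  fin_cases j <;> simp [LinearMap.add_comp, LinearMap.sub_comp, LinearMap.smul_comp, hb]

theorem exists_stdG2_restrict_eq_of_not_altDec (hsq : ∀ a : F, IsSquare a)
    (hV : finrank F V = 7) (hn : n ≠ 0) {Θ : LinearMap.ker n [⋀^Fin 4]→ₗ[F] F}
    (hΘ : ¬ AltDec 4 Θ) : ∃ b : Basis (Fin 7) F (Dual F V),
      (stdG2 b).compLinearMap (LinearMap.ker n).subtype = Θ := by
  have : Module.Finite F V := finite_of_finrank_pos (by omega)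
  have hker := Dual.finrank_ker_add_one_of_ne_zero hn
  obtain ⟨i, hi⟩ := hsq (-1)
  obtain ⟨f, rfl | rfl⟩ := exists_eq_pairWedge_add_of_not_altDec hsq (by omega) hΘ
  · exact exists_stdG2_restrict_eq_pairWedge_add_two hi.symm hn f
  · exact exists_stdG2_restrict_eq_pairWedge_add_three hn f

end Hyperplane

section Nondegenerate

variable {F : Type*} [Field F] {V : Type*} [AddCommGroup V] [Module F V]

/-- The four-form of `stdG2` after a relabelling of the covectors that makes it invariant under
cyclic shifts: its seven terms are the complements of the lines of the Fano plane. -/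
noncomputable def cyclicForm (c : Fin 7 → Dual F V) : V [⋀^Fin 4]→ₗ[F] F :=
  ∑ i, wedgeCov 4 ![c i, c (i + 2), c (i + 3), c (i + 4)]

lemma bw_rotate_init (b : Basis (Fin 7) F (Dual F V)) (i j k l : Fin 7) :
    bw b k i j l = bw b i j k l := by
  simp only [bw, wedgeCov_four]
  exact covWedge_rotate _ _ _ _

lemma bw_rotate_tail (b : Basis (Fin 7) F (Dual F V)) (i j k l : Fin 7) :
    bw b i l j k = bw b i j k l := by
  simp only [bw, wedgeCov_four]
  exact congrArg (covWedge (b i)) (covWedge_rotate _ _ _ _)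

lemma exists_stdG2_eq_cyclicForm (b : Basis (Fin 7) F (Dual F V)) :
    ∃ c : Basis (Fin 7) F (Dual F V), stdG2 b = cyclicForm c := by
  let τ : Fin 7 ≃ Fin 7 := Equiv.ofBijective ![0, 1, 5, 6, 2, 4, 3] (by decide)
  have h0 : bw b 0 5 6 2 = bw b 0 2 5 6 := (bw_rotate_tail b ..).trans (bw_rotate_tail b ..)
  have h1 : bw b 1 6 2 4 = bw b 1 2 4 6 := bw_rotate_tail b ..
  have h2 : bw b 5 2 4 3 = bw b 2 3 4 5 :=
    (bw_rotate_init b ..).trans ((bw_rotate_tail b ..).trans (bw_rotate_tail b ..))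
  have h3 : bw b 6 4 3 0 = bw b 0 3 4 6 :=
    (bw_rotate_tail b ..).trans ((bw_rotate_init b ..).trans
      ((bw_rotate_init b ..).trans (bw_rotate_tail b ..)))
  have h4 : bw b 2 3 0 1 = bw b 0 1 2 3 := (bw_rotate_init b ..).trans
    ((bw_rotate_init b ..).trans ((bw_rotate_tail b ..).trans (bw_rotate_tail b ..)))
  have h5 : bw b 4 0 1 5 = bw b 0 1 4 5 := bw_rotate_init b ..
  have h6 : bw b 3 1 5 6 = -bw b 1 3 5 6 := by
    simp only [bw, wedgeCov_four]
    exact covWedge_swap _ _ _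
  refine ⟨b.reindex τ.symm, ?_⟩
  have hτ : ⇑(b.reindex τ.symm) = ![b 0, b 1, b 5, b 6, b 2, b 4, b 3] := by
    funext i
    fin_cases i <;> simp [τ]
  have hsum : cyclicForm (b.reindex τ.symm) = bw b 0 5 6 2 + bw b 1 6 2 4 + bw b 5 2 4 3 +
      bw b 6 4 3 0 + bw b 2 3 0 1 + bw b 4 0 1 5 + bw b 3 1 5 6 := by
    rw [hτ, cyclicForm, Fin.sum_univ_seven]
    rfl
  rw [hsum, h0, h1, h2, h3, h4, h5, h6, stdG2]
  abel

lemma covWedge_four_apply (α : Dual F V) (ψ : V [⋀^Fin 3]→ₗ[F] F) (w x y z : V) :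
    covWedge α ψ ![w, x, y, z] =
      α w * ψ ![x, y, z] - α x * ψ ![w, y, z] + α y * ψ ![w, x, z] - α z * ψ ![w, x, y] := by
  rw [covWedge_apply, Fin.sum_univ_four]
  have h0 : Fin.removeNth 0 ![w, x, y, z] = ![x, y, z] := by ext i; fin_cases i <;> rfl
  have h1 : Fin.removeNth 1 ![w, x, y, z] = ![w, y, z] := by ext i; fin_cases i <;> rfl
  have h2 : Fin.removeNth 2 ![w, x, y, z] = ![w, x, z] := by ext i; fin_cases i <;> rfl
  have h3 : Fin.removeNth 3 ![w, x, y, z] = ![w, x, y] := by ext i; fin_cases i <;> rfl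
  rw [h0, h1, h2, h3]
  simp [pow_succ, sub_eq_add_neg]

lemma wedgeCov_three_apply (α β γ : Dual F V) (x y z : V) :
    wedgeCov 3 ![α, β, γ] ![x, y, z] =
      α x * β y * γ z - α x * γ y * β z - β x * α y * γ z + β x * γ y * α z +
        γ x * α y * β z - γ x * β y * α z := by
  rw [wedgeCov_apply, Matrix.det_fin_three]
  rfl

lemma wedgeCov_four_apply (α β γ δ : Dual F V) (w x y z : V) :
    wedgeCov 4 ![α, β, γ, δ] ![w, x, y, z] =
      α w * wedgeCov 3 ![β, γ, δ] ![x, y, z] - α x * wedgeCov 3 ![β, γ, δ] ![w, y, z] +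
        α y * wedgeCov 3 ![β, γ, δ] ![w, x, z] - α z * wedgeCov 3 ![β, γ, δ] ![w, x, y] := by
  rw [← covWedge_four_apply, ← wedgeCov_cons]
  rfl

lemma cyclicForm_comp_add (c : Fin 7 → Dual F V) (s : Fin 7) :
    cyclicForm (fun i ↦ c (s + i)) = cyclicForm c := by
  simp only [cyclicForm, ← add_assoc]
  exact Equiv.sum_comp (Equiv.addLeft s) fun i ↦ wedgeCov 4 ![c i, c (i + 2), c (i + 3), c (i + 4)]

-- The index sets are the complements of the lines of the Fano plane. Any two of them share two
-- indices, so their incidence matrix `M` satisfies `M * Mᵀ = 2 I + 2 J`, with `J` all ones, and has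
-- a power of two as determinant up to sign.
lemma eq_zero_of_cyclic_sums_eq_zero [NeZero (2 : F)] {D : Fin 7 → F}
    (h : ∀ s, D s + D (s + 2) + D (s + 3) + D (s + 4) = 0) (i : Fin 7) : D i = 0 := by
  have hzero : ∀ E : Fin 7 → F, (∀ s, E s + E (s + 2) + E (s + 3) + E (s + 4) = 0) → E 0 = 0 := by
    intro E hE
    have hrel : (E 0 + E 2 + E 3 + E 4 = 0 ∧ E 1 + E 3 + E 4 + E 5 = 0 ∧
        E 2 + E 4 + E 5 + E 6 = 0 ∧ E 3 + E 5 + E 6 + E 0 = 0 ∧ E 4 + E 6 + E 0 + E 1 = 0 ∧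
        E 5 + E 0 + E 1 + E 2 = 0 ∧ E 6 + E 1 + E 2 + E 3 = 0) :=
      ⟨hE 0, hE 1, hE 2, hE 3, hE 4, hE 5, hE 6⟩
    obtain ⟨h0, h1, h2, h3, h4, h5, h6⟩ := hrel
    apply mul_left_cancel₀ (mul_ne_zero (two_ne_zero (α := F)) two_ne_zero)
    linear_combination h0 + h5 + h4 + h3 - h1 - h2 - h6
  simpa only [add_zero] using hzero (fun j ↦ D (i + j)) fun s ↦ by
    simpa only [add_assoc] using h (i + s)

section CovWedgeCurryLeft

variable {c : Fin 7 → Dual F V} {e : Fin 7 → V} {n : Dual F V} {k : V}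

lemma relations_of_covWedge_curryLeft_cyclicForm_eq_zero [NeZero (2 : F)]
    (hce : ∀ i j, c i (e j) = if i = j then 1 else 0)
    (h : covWedge n ((cyclicForm c).curryLeft k) = 0) :
    (n (e 0) * c 0 k + n (e 2) * c 2 k + n (e 3) * c 3 k + n (e 4) * c 4 k = 0) ∧
      (n (e 1) * c 3 k + n (e 3) * c 1 k = 0) ∧ (n (e 2) * c 6 k + n (e 6) * c 2 k = 0) ∧
        (n (e 4) * c 5 k + n (e 5) * c 4 k = 0) := by
  have heval := fun w x y z ↦
    (covWedge_four_apply n ((cyclicForm c).curryLeft k) (e w) (e x) (e y) (e z)).symm.trans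
      (DFunLike.congr_fun h _)
  simp only [AlternatingMap.curryLeft_apply_apply, cyclicForm, Fin.sum_univ_seven,
    AlternatingMap.add_apply, wedgeCov_four_apply, wedgeCov_three_apply] at heval
  have h0124 : -(n (e 1) * c 3 k) - n (e 2) * c 6 k - n (e 4) * c 5 k = 0 := by
    simpa [hce, ← sub_eq_add_neg] using heval 0 1 2 4
  have h0156 : -(n (e 1) * c 3 k) + n (e 5) * c 4 k + n (e 6) * c 2 k = 0 := by
    simpa [hce] using heval 0 1 5 6
  have h0235 : -(n (e 2) * c 6 k) + n (e 3) * c 1 k + n (e 5) * c 4 k = 0 := by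
    simpa [hce] using heval 0 2 3 5
  have h0346 : n (e 3) * c 1 k - n (e 4) * c 5 k + n (e 6) * c 2 k = 0 := by
    simpa [hce, ← sub_eq_add_neg] using heval 0 3 4 6
  refine ⟨by simpa [hce] using heval 0 2 3 4, ?_, ?_, ?_⟩ <;>
    apply mul_left_cancel₀ (two_ne_zero (α := F))
  · linear_combination h0235 + h0346 - h0156 - h0124
  · linear_combination h0156 + h0346 - h0235 - h0124
  · linear_combination h0156 + h0235 - h0346 - h0124

lemma relations_add_of_covWedge_curryLeft_cyclicForm_eq_zero [NeZero (2 : F)]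
    (hce : ∀ i j, c i (e j) = if i = j then 1 else 0)
    (h : covWedge n ((cyclicForm c).curryLeft k) = 0) (s : Fin 7) :
    (n (e (s + 0)) * c (s + 0) k + n (e (s + 2)) * c (s + 2) k + n (e (s + 3)) * c (s + 3) k +
        n (e (s + 4)) * c (s + 4) k = 0) ∧
      (n (e (s + 1)) * c (s + 3) k + n (e (s + 3)) * c (s + 1) k = 0) ∧
        (n (e (s + 2)) * c (s + 6) k + n (e (s + 6)) * c (s + 2) k = 0) ∧
          (n (e (s + 4)) * c (s + 5) k + n (e (s + 5)) * c (s + 4) k = 0) :=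
  relations_of_covWedge_curryLeft_cyclicForm_eq_zero
    (c := fun i ↦ c (s + i)) (e := fun i ↦ e (s + i))
    (fun i j ↦ by simp only [hce, add_right_inj]) (by rwa [cyclicForm_comp_add])

lemma mul_self_eq_zero_of_covWedge_curryLeft_cyclicForm_eq_zero [NeZero (2 : F)]
    (hce : ∀ i j, c i (e j) = if i = j then 1 else 0)
    (h : covWedge n ((cyclicForm c).curryLeft k) = 0) (i : Fin 7) : n (e i) * c i k = 0 :=
  eq_zero_of_cyclic_sums_eq_zero (D := fun j ↦ n (e j) * c j k) (fun s ↦ by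
    simpa only [add_zero] using
      (relations_add_of_covWedge_curryLeft_cyclicForm_eq_zero hce h s).1) i

lemma mul_add_mul_eq_zero_of_covWedge_curryLeft_cyclicForm_eq_zero [NeZero (2 : F)]
    (hce : ∀ i j, c i (e j) = if i = j then 1 else 0)
    (h : covWedge n ((cyclicForm c).curryLeft k) = 0) {i j : Fin 7} (hij : i ≠ j) :
    n (e i) * c j k + n (e j) * c i k = 0 := by
  obtain ⟨s, hs⟩ : ∃ s : Fin 7, i = s + 1 ∧ j = s + 3 ∨ j = s + 1 ∧ i = s + 3 ∨
      i = s + 2 ∧ j = s + 6 ∨ j = s + 2 ∧ i = s + 6 ∨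
      i = s + 4 ∧ j = s + 5 ∨ j = s + 4 ∧ i = s + 5 := by
    revert i j
    decide
  obtain ⟨-, h13, h26, h45⟩ := relations_add_of_covWedge_curryLeft_cyclicForm_eq_zero hce h s
  rcases hs with ⟨rfl, rfl⟩ | ⟨rfl, rfl⟩ | ⟨rfl, rfl⟩ | ⟨rfl, rfl⟩ | ⟨rfl, rfl⟩ | ⟨rfl, rfl⟩
  · exact h13
  · exact (add_comm _ _).trans h13
  · exact h26
  · exact (add_comm _ _).trans h26
  · exact h45
  · exact (add_comm _ _).trans h45

end CovWedgeCurryLeft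

theorem eq_zero_or_eq_zero_of_covWedge_curryLeft_stdG2_eq_zero [NeZero (2 : F)]
    [Module.Finite F V] (b : Basis (Fin 7) F (Dual F V)) {n : Dual F V} {k : V}
    (h : covWedge n ((stdG2 b).curryLeft k) = 0) : n = 0 ∨ k = 0 := by
  obtain ⟨c, hc⟩ := exists_stdG2_eq_cyclicForm b
  obtain ⟨e, hce⟩ := exists_predual_basis c
  rw [hc] at h
  by_contra! hnk
  obtain ⟨i, hi⟩ : ∃ i, n (e i) ≠ 0 := by
    by_contra! hn
    exact hnk.1 (e.ext hn)
  have hik : c i k = 0 := (mul_eq_zero.1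
    (mul_self_eq_zero_of_covWedge_curryLeft_cyclicForm_eq_zero hce h i)).resolve_left hi
  refine hnk.2 ((forall_dual_apply_eq_zero_iff F k).1 fun φ ↦ ?_)
  suffices hck : ∀ j, c j k = 0 from LinearMap.congr_fun (c.ext hck : Dual.eval F V k = 0) φ
  intro j
  obtain rfl | hij := eq_or_ne i j
  · exact hik
  · have hsum := mul_add_mul_eq_zero_of_covWedge_curryLeft_cyclicForm_eq_zero hce h hij
    rw [hik, mul_zero, add_zero] at hsum
    exact (mul_eq_zero.1 hsum).resolve_left hi

end Nondegenerate

section Restriction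

variable {F : Type*} [Field F] {V : Type*} [AddCommGroup V] [Module F V]

lemma exists_curryLeft_wedgeCov_eq_zero [Module.Finite F V] {k : ℕ} (hk : k + 1 < finrank F V)
    (φ : Fin (k + 1) → Dual F V) : ∃ u ≠ 0, (wedgeCov (k + 1) φ).curryLeft u = 0 := by
  obtain ⟨u, hu, hu0⟩ := (LinearMap.pi φ).ker.exists_mem_ne_zero_of_ne_bot
    (LinearMap.ker_ne_bot_of_finrank_lt (by simpa using hk))
  refine ⟨u, hu0, ?_⟩
  ext x
  rw [AlternatingMap.curryLeft_apply_apply, wedgeCov_apply]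
  exact Matrix.det_eq_zero_of_row_eq_zero 0 fun i ↦ congrFun (LinearMap.mem_ker.1 hu) i

theorem not_altDec_restrict_stdG2 [NeZero (2 : F)] (hV : finrank F V = 7)
    (b : Basis (Fin 7) F (Dual F V)) {n : Dual F V} (hn : n ≠ 0) :
    ¬ AltDec 4 ((stdG2 b).compLinearMap (LinearMap.ker n).subtype) := by
  rintro ⟨φ, hφ⟩
  have : Module.Finite F V := finite_of_finrank_pos (by omega)
  have hker := Dual.finrank_ker_add_one_of_ne_zero hn
  obtain ⟨u, hu0, hu⟩ := exists_curryLeft_wedgeCov_eq_zero (by omega) φ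
  rw [← hφ, AlternatingMap.curryLeft_compLinearMap] at hu
  have hwedge : covWedge n ((stdG2 b).curryLeft u) = 0 :=
    (covWedge_congr_of_restrict_eq (χ := 0) hu).trans (map_zero _)
  have hu0' : (u : V) ≠ 0 := by simpa using hu0
  exact (eq_zero_or_eq_zero_of_covWedge_curryLeft_stdG2_eq_zero b hwedge).elim hn hu0'

lemma AltDec.compLinearMap {W : Type*} [AddCommGroup W] [Module F W] {m : ℕ}
    {X : V [⋀^Fin m]→ₗ[F] F} (hX : AltDec m X) (π : W →ₗ[F] V) : AltDec m (X.compLinearMap π) := by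
  obtain ⟨φ, rfl⟩ := hX
  exact ⟨_, wedgeCov_compLinearMap φ π⟩

lemma altLenLE_one_iff_altDec {m : ℕ} {X : V [⋀^Fin m]→ₗ[F] F} : AltLenLE m 1 X ↔ AltDec m X := by
  refine ⟨?_, fun hX ↦ ⟨fun _ ↦ X, fun _ ↦ hX, by simp⟩⟩
  rintro ⟨Y, hY, rfl⟩
  simpa using hY 0

/-- The projection of `V` onto the hyperplane `ker n` along a vector `e` with `n e = 1`. -/
noncomputable def kerProj (n : Dual F V) {e : V} (he : n e = 1) : V →ₗ[F] LinearMap.ker n :=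
  (LinearMap.id - n.smulRight e).codRestrict (LinearMap.ker n) (by simp [he])

section KerProj

variable {n : Dual F V} {e : V} (he : n e = 1)

lemma coe_kerProj (x : V) : (kerProj n he x : V) = x - n x • e :=
  rfl

lemma kerProj_comp_subtype : kerProj n he ∘ₗ (LinearMap.ker n).subtype = LinearMap.id := by
  ext x
  simp [coe_kerProj]

lemma kerProj_self : kerProj n he e = 0 := by
  ext
  simp [coe_kerProj, he]

lemma comp_subtype_comp_kerProj {φ : Dual F V} (hφ : φ e = 0) :
    (φ ∘ₗ (LinearMap.ker n).subtype) ∘ₗ kerProj n he = φ := by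
  ext x
  simp [coe_kerProj, hφ]

lemma compLinearMap_kerProj_restrict {k : ℕ} (Θ : LinearMap.ker n [⋀^Fin k]→ₗ[F] F) :
    (Θ.compLinearMap (kerProj n he)).compLinearMap (LinearMap.ker n).subtype = Θ := by
  rw [AlternatingMap.compLinearMap_assoc, kerProj_comp_subtype, AlternatingMap.compLinearMap_id]

lemma restrict_compLinearMap_kerProj {Ω : V [⋀^Fin 4]→ₗ[F] F}
    (hΩ : mem4Pow (LinearMap.ker (Dual.eval F V e)) Ω) :
    (Ω.compLinearMap (LinearMap.ker n).subtype).compLinearMap (kerProj n he) = Ω := by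
  induction hΩ using Submodule.span_induction with
  | mem Ω hΩ =>
    obtain ⟨φ, hφ, rfl⟩ := hΩ
    rw [wedgeCov_compLinearMap, wedgeCov_compLinearMap]
    exact congrArg (wedgeCov 4) (funext fun i ↦ comp_subtype_comp_kerProj he (hφ i))
  | zero => rfl
  | add Ω Ω' _ _ hΩ hΩ' => exact congrArg₂ (· + ·) hΩ hΩ'
  | smul a Ω _ hΩ => exact congrArg (a • ·) hΩ

end KerProj

lemma mem4Pow_g2DualForm {W : Submodule F (Dual F V)} {φ : Fin 7 → Dual F V}
    (hφ : ∀ i, φ i ∈ W) : mem4Pow W (g2DualForm φ) := by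
  have hmem : ∀ i j k l, mem4Pow W (wedgeCov 4 ![φ i, φ j, φ k, φ l]) := fun i j k l ↦
    Submodule.subset_span ⟨_, by simp [Fin.forall_fin_succ, hφ], rfl⟩
  unfold mem4Pow g2DualForm at *
  apply_rules [Submodule.add_mem, Submodule.sub_mem]

lemma exists_dual_ker_eq {W : Submodule F V} [Module.Finite F V]
    (hW : finrank F W + 1 = finrank F V) {e : V} (he : e ∉ W) :
    ∃ n : Dual F V, LinearMap.ker n = W ∧ n e = 1 := by
  obtain ⟨m, hme, hWm⟩ := Submodule.exists_le_ker_of_notMem he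
  have hm : m ≠ 0 := by
    rintro rfl
    exact hme rfl
  refine ⟨(m e)⁻¹ • m, ?_, by simp [hme]⟩
  rw [LinearMap.ker_smul _ _ (inv_ne_zero hme)]
  refine (Submodule.eq_of_le_of_finrank_eq hWm ?_).symm
  have := Dual.finrank_ker_add_one_of_ne_zero hm
  omega

end Restriction

theorem stmt15_general {F : Type*} [Field F] [NeZero (2 : F)] (hsq : ∀ a : F, IsSquare a)
    {g : Type*} [LieRing g] [LieAlgebra F g] (hg : finrank F g = 7)
    (u : LieIdeal F g) (habel : ∀ x ∈ u, ∀ y ∈ u, ⁅x, y⁆ = (0 : g))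
    (hu : finrank F ↥u = 6) (e₇ : g) (he : e₇ ∉ u) :
    (∃ Ψ : g [⋀^Fin 4]→ₗ[F] F, ceDiff 3 ⇑Ψ = 0 ∧
        ∃ b : Basis (Fin 7) F (Module.Dual F g), Ψ = stdG2 b) ↔
      (∃ Ω : g [⋀^Fin 4]→ₗ[F] F, ceDiff 3 ⇑Ω = 0 ∧
        mem4Pow (LinearMap.ker (Module.Dual.eval F g e₇)) Ω ∧ ¬ AltLenLE 4 1 Ω) := by
  have : Module.Finite F g := finite_of_finrank_pos (by omega)
  obtain ⟨n, hnu, hne⟩ := exists_dual_ker_eq (hu ▸ hg.symm : finrank F u + 1 = finrank F g) he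
  have hn : n ≠ 0 := by
    rintro rfl
    exact zero_ne_one hne
  simp only [altLenLE_one_iff_altDec]
  constructor
  · rintro ⟨_, hclosed, b, rfl⟩
    have hres := compLinearMap_kerProj_restrict hne
      ((stdG2 b).compLinearMap (LinearMap.ker n).subtype)
    refine ⟨_, (ceDiff_congr_of_abelian_ideal habel hnu hne hres).trans hclosed, ?_, fun hdec ↦
      not_altDec_restrict_stdG2 hg b hn (hres ▸ hdec.compLinearMap _)⟩
    rw [stdG2_eq_g2DualForm, g2DualForm_compLinearMap, g2DualForm_compLinearMap]
    exact mem4Pow_g2DualForm fun i ↦ by simp [kerProj_self]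
  · rintro ⟨Ω, hclosed, hΩ, hdec⟩
    have hΩn := restrict_compLinearMap_kerProj hne hΩ
    obtain ⟨b, hb⟩ := exists_stdG2_restrict_eq_of_not_altDec hsq hg hn
      (Θ := Ω.compLinearMap (LinearMap.ker n).subtype) fun h ↦ hdec (hΩn ▸ h.compLinearMap _)
    exact ⟨stdG2 b, (ceDiff_congr_of_abelian_ideal habel hnu hne hb).trans hclosed, b, rfl⟩

/-- Let `g` be a seven-dimensional complex Lie algebra with a
six-dimensional (complex) abelian ideal `u` and `e₇ ∈ g ∖ u`.  Then `g` admits a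
cocalibrated `(G₂)_ℂ`-structure (a closed four-form of the standard type `stdG2`) iff
there is a closed four-form `Ω ∈ Λ⁴Ann(span e₇)` of length `≥ 2`. -/
theorem stmt15 {g : Type*} [LieRing g] [LieAlgebra ℂ g] [FiniteDimensional ℂ g]
    (hg : finrank ℂ g = 7)
    (u : LieIdeal ℂ g) (habel : ∀ x ∈ u, ∀ y ∈ u, ⁅x, y⁆ = (0 : g))
    (hu : finrank ℂ ↥u = 6) (e₇ : g) (he : e₇ ∉ u) :
    (∃ Ψ : g [⋀^Fin 4]→ₗ[ℂ] ℂ, ceDiff 3 ⇑Ψ = 0 ∧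
        ∃ b : Basis (Fin 7) ℂ (Module.Dual ℂ g), Ψ = stdG2 b) ↔
      (∃ Ω : g [⋀^Fin 4]→ₗ[ℂ] ℂ, ceDiff 3 ⇑Ω = 0 ∧
        mem4Pow (LinearMap.ker (Module.Dual.eval ℂ g e₇)) Ω ∧ ¬ AltLenLE 4 1 Ω) := by
  exact stmt15_general IsAlgClosed.exists_eq_mul_self hg u habel hu e₇ he
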